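/- arXiv:2305.13151 — 2 statements merged into one kernel-verified Lean document; each statement's English description precedes it below -/
import Mathlib

section
/- For all integers m ≥ 1 and n ≥ 1, p^{od}_{ed}(m,2n) - p^{od}_{ed}(m,2n-1) = D_o(m,2n). -/
/-- Number of partitions of `n` into exactly `m` distinct parts in which
every even part is smaller than every odd part. -/
noncomputable def podEd (m n : ℕ) : ℕ :=
  Nat.card {π : n.Partition // π.parts.Nodup ∧ Multiset.card π.parts = m ∧
    ∀ a ∈ π.parts, ∀ b ∈ π.parts, Even a → Odd b → a < b}

/-- Number of partitions of `n` into exactly `m` distinct odd parts. -/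
noncomputable def Dodd (m n : ℕ) : ℕ :=
  Nat.card {π : n.Partition // π.parts.Nodup ∧ Multiset.card π.parts = m ∧
    ∀ a ∈ π.parts, Odd a}

/-!
Among partitions into distinct parts with every even part below every odd part, lowering the
largest even part by one is inverse to raising the smallest odd part by one: the lowered part lies
above all remaining even parts and becomes the smallest odd part, and vice versa. So the partitions
of `N + 1` with an even part are equinumerous with the partitions of `N` with an odd part. What
remains on the two sides are the partitions of `N + 1` into odd parts and those of `N` into even
parts, and there are none of the latter when `N` is odd.
-/

open Finset

/-- Number of partitions of `n` into exactly `m` distinct even parts, the counterpart of `Dodd`. -/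
noncomputable def Deven (m n : ℕ) : ℕ :=
  Nat.card {π : n.Partition // π.parts.Nodup ∧ Multiset.card π.parts = m ∧
    ∀ a ∈ π.parts, Even a}

section DistinctPartSets

variable {m n : ℕ}

/-- Partitions of `n` into exactly `m` distinct parts, each encoded by its set of parts. -/
def distinctPartSets (m n : ℕ) : Finset (Finset ℕ) :=
  {s ∈ powersetCard m (Icc 1 n) | ∑ x ∈ s, x = n}

theorem mem_distinctPartSets {s : Finset ℕ} :
    s ∈ distinctPartSets m n ↔ 0 ∉ s ∧ #s = m ∧ ∑ x ∈ s, x = n := by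
  simp only [distinctPartSets, mem_filter, mem_powersetCard, and_assoc]
  constructor
  · rintro ⟨hsub, hcard, hsum⟩
    exact ⟨fun h0 => by simpa using hsub h0, hcard, hsum⟩
  · rintro ⟨h0, hcard, hsum⟩
    refine ⟨fun x hx => mem_Icc.2 ⟨?_, ?_⟩, hcard, hsum⟩
    · exact Nat.one_le_iff_ne_zero.2 (ne_of_mem_of_not_mem hx h0)
    · exact hsum ▸ single_le_sum (f := fun x => x) (fun _ _ => Nat.zero_le _) hx

theorem natCard_partition_eq_card_filter (m n : ℕ) (P : Multiset ℕ → Prop)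
    [DecidablePred fun s : Finset ℕ => P s.val] :
    Nat.card {π : n.Partition // π.parts.Nodup ∧ Multiset.card π.parts = m ∧ P π.parts} =
      #{s ∈ distinctPartSets m n | P s.val} := by
  rw [← Nat.card_eq_finsetCard]
  refine Nat.card_congr
    { toFun := fun π => ⟨⟨π.1.parts, π.2.1⟩, ?_⟩
      invFun := fun s => ⟨⟨s.1.val, ?_, ?_⟩, s.1.nodup, ?_⟩
      left_inv := fun _ => rfl
      right_inv := fun _ => rfl }
  · obtain ⟨π, -, hcard, hP⟩ := π
    refine mem_filter.2 ⟨mem_distinctPartSets.2 ⟨?_, hcard, ?_⟩, hP⟩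
    · exact fun h0 => (π.parts_pos h0).false
    · exact (sum_val _).symm.trans π.parts_sum
  all_goals
    obtain ⟨s, hs⟩ := s
    obtain ⟨hmem, hP⟩ := mem_filter.1 hs
    obtain ⟨h0, hcard, hsum⟩ := mem_distinctPartSets.1 hmem
  · exact fun hx => Nat.pos_of_ne_zero (ne_of_mem_of_not_mem hx h0)
  · exact (sum_val s).trans hsum
  · exact ⟨hcard, hP⟩

end DistinctPartSets

section ReplacePart

variable {s : Finset ℕ} {a b : ℕ}

/-- The set of parts obtained from `s` by changing the part `a` into `b`. -/
def replacePart (s : Finset ℕ) (a b : ℕ) : Finset ℕ :=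
  insert b (s.erase a)

theorem mem_replacePart {x : ℕ} : x ∈ replacePart s a b ↔ x = b ∨ x ≠ a ∧ x ∈ s := by
  rw [replacePart, mem_insert, mem_erase]

theorem replacePart_replacePart (ha : a ∈ s) (hb : b ∉ s) :
    replacePart (replacePart s a b) b a = s := by
  rw [replacePart, replacePart, erase_insert (mt mem_of_mem_erase hb), insert_erase ha]

theorem card_replacePart (ha : a ∈ s) (hb : b ∉ s) : #(replacePart s a b) = #s := by
  rw [replacePart, card_insert_of_notMem (mt mem_of_mem_erase hb), card_erase_add_one ha]

theorem sum_replacePart_add (ha : a ∈ s) (hb : b ∉ s) :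
    ∑ x ∈ replacePart s a b, x + a = ∑ x ∈ s, x + b := by
  rw [replacePart, sum_insert (mt mem_of_mem_erase hb), ← sum_erase_add s _ ha]
  ring

theorem replacePart_mem_distinctPartSets {m n k : ℕ} (hs : s ∈ distinctPartSets m n)
    (ha : a ∈ s) (hb : b ∉ s) (hb0 : b ≠ 0) (hk : k + a = n + b) :
    replacePart s a b ∈ distinctPartSets m k := by
  obtain ⟨h0, hcard, hsum⟩ := mem_distinctPartSets.1 hs
  refine mem_distinctPartSets.2 ⟨?_, (card_replacePart ha hb).trans hcard, ?_⟩
  · rw [mem_replacePart]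
    exact not_or.2 ⟨hb0.symm, fun h => h0 h.2⟩
  · have := sum_replacePart_add ha hb
    omega

end ReplacePart

/-- Every even element of `s` is smaller than every odd element of `s`: the condition on the set of
parts in the definition of `podEd`. -/
def EvenLtOdd (s : Finset ℕ) : Prop :=
  ∀ a ∈ s, ∀ b ∈ s, Even a → Odd b → a < b

instance : DecidablePred EvenLtOdd := fun s =>
  inferInstanceAs (Decidable (∀ a ∈ s, ∀ b ∈ s, Even a → Odd b → a < b))

/-- `s` with its largest even element lowered by one; meaningful only if `s` has an even element and
does not contain `0`. -/
noncomputable def lowerMaxEven (s : Finset ℕ) : Finset ℕ :=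
  replacePart s (sSup {a ∈ s | Even a}) (sSup {a ∈ s | Even a} - 1)

/-- `s` with its smallest odd element raised by one; meaningful only if `s` has an odd element. -/
noncomputable def raiseMinOdd (s : Finset ℕ) : Finset ℕ :=
  replacePart s (sInf {b ∈ s | Odd b}) (sInf {b ∈ s | Odd b} + 1)

section LowerRaise

variable {s : Finset ℕ} {b m n : ℕ}

theorem exists_isGreatest_even_succ (h0 : 0 ∉ s) (hs : ∃ a ∈ s, Even a) :
    ∃ b, IsGreatest {a ∈ s | Even a} (b + 1) := by
  have hfin : {a | a ∈ s ∧ Even a}.Finite := s.finite_toSet.subset fun _ ha => ha.1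
  have hmax : IsGreatest {a | a ∈ s ∧ Even a} (sSup {a | a ∈ s ∧ Even a}) :=
    ⟨Set.Nonempty.csSup_mem hs hfin, fun _ ha => le_csSup hfin.bddAbove ha⟩
  obtain ⟨b, hb⟩ := Nat.exists_eq_succ_of_ne_zero (ne_of_mem_of_not_mem hmax.1.1 h0)
  exact ⟨b, by rwa [hb] at hmax⟩

theorem odd_of_isGreatest_even_succ (hmax : IsGreatest {a ∈ s | Even a} (b + 1)) : Odd b :=
  Nat.not_even_iff_odd.1 (Nat.even_add_one.1 hmax.1.2)

theorem lowerMaxEven_eq_replacePart (hmax : IsGreatest {a ∈ s | Even a} (b + 1)) :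
    lowerMaxEven s = replacePart s (b + 1) b := by
  rw [lowerMaxEven, hmax.csSup_eq, Nat.add_sub_cancel]

theorem raiseMinOdd_eq_replacePart (hmin : IsLeast {c ∈ s | Odd c} b) :
    raiseMinOdd s = replacePart s b (b + 1) := by
  rw [raiseMinOdd, hmin.csInf_eq]

namespace EvenLtOdd

theorem notMem_of_succ_mem (hs : EvenLtOdd s) (hb : Odd b) (hmem : b + 1 ∈ s) : b ∉ s :=
  fun h => (Nat.lt_succ_self b).not_gt (hs _ hmem _ h hb.add_one hb)

theorem notMem_of_isGreatest_even (hs : EvenLtOdd s)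
    (hmax : IsGreatest {a ∈ s | Even a} (b + 1)) : b ∉ s :=
  hs.notMem_of_succ_mem (odd_of_isGreatest_even_succ hmax) hmax.1.1

theorem succ_notMem_of_isLeast_odd (hs : EvenLtOdd s)
    (hmin : IsLeast {c ∈ s | Odd c} b) : b + 1 ∉ s :=
  fun h => hs.notMem_of_succ_mem hmin.1.2 h hmin.1.1

theorem replacePart_of_isGreatest_even (hs : EvenLtOdd s)
    (hmax : IsGreatest {a ∈ s | Even a} (b + 1)) :
    EvenLtOdd (replacePart s (b + 1) b) := by
  intro x hx y hy hxe hyo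
  obtain rfl | ⟨hxb, hxs⟩ := mem_replacePart.1 hx
  · exact absurd hxe (Nat.not_even_iff_odd.2 (odd_of_isGreatest_even_succ hmax))
  obtain rfl | ⟨-, hys⟩ := mem_replacePart.1 hy
  · have hle : x ≤ y + 1 := hmax.2 ⟨hxs, hxe⟩
    grind
  · exact hs x hxs y hys hxe hyo

theorem isLeast_odd_replacePart (hs : EvenLtOdd s)
    (hmax : IsGreatest {a ∈ s | Even a} (b + 1)) :
    IsLeast {c ∈ replacePart s (b + 1) b | Odd c} b := by
  refine ⟨⟨mem_replacePart.2 (.inl rfl), odd_of_isGreatest_even_succ hmax⟩, ?_⟩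
  rintro y ⟨hy, hyo⟩
  obtain rfl | ⟨-, hys⟩ := mem_replacePart.1 hy
  · exact le_rfl
  · exact (Nat.lt_of_succ_lt (hs _ hmax.1.1 y hys hmax.1.2 hyo)).le

theorem replacePart_of_isLeast_odd (hs : EvenLtOdd s) (hmin : IsLeast {c ∈ s | Odd c} b) :
    EvenLtOdd (replacePart s b (b + 1)) := by
  intro x hx y hy hxe hyo
  obtain rfl | ⟨hyb, hys⟩ := mem_replacePart.1 hy
  · exact absurd hmin.1.2.add_one (Nat.not_even_iff_odd.2 hyo)
  obtain rfl | ⟨-, hxs⟩ := mem_replacePart.1 hx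
  · have hle : b ≤ y := hmin.2 ⟨hys, hyo⟩
    grind
  · exact hs x hxs y hys hxe hyo

theorem isGreatest_even_replacePart (hs : EvenLtOdd s) (hmin : IsLeast {c ∈ s | Odd c} b) :
    IsGreatest {a ∈ replacePart s b (b + 1) | Even a} (b + 1) := by
  refine ⟨⟨mem_replacePart.2 (.inl rfl), hmin.1.2.add_one⟩, ?_⟩
  rintro x ⟨hx, hxe⟩
  obtain rfl | ⟨-, hxs⟩ := mem_replacePart.1 hx
  · exact le_rfl
  · exact (Nat.lt_succ_of_lt (hs x hxs b hmin.1.1 hxe hmin.1.2)).le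

theorem raiseMinOdd_lowerMaxEven (hs : EvenLtOdd s) (h0 : 0 ∉ s) (hex : ∃ a ∈ s, Even a) :
    raiseMinOdd (lowerMaxEven s) = s := by
  obtain ⟨b, hmax⟩ := exists_isGreatest_even_succ h0 hex
  rw [lowerMaxEven_eq_replacePart hmax,
    raiseMinOdd_eq_replacePart (hs.isLeast_odd_replacePart hmax),
    replacePart_replacePart hmax.1.1 (hs.notMem_of_isGreatest_even hmax)]

theorem lowerMaxEven_raiseMinOdd (hs : EvenLtOdd s) (hex : ∃ b ∈ s, Odd b) :
    lowerMaxEven (raiseMinOdd s) = s := by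
  have hmin := isLeast_csInf (s := {b | b ∈ s ∧ Odd b}) hex
  rw [raiseMinOdd_eq_replacePart hmin,
    lowerMaxEven_eq_replacePart (hs.isGreatest_even_replacePart hmin),
    replacePart_replacePart hmin.1.1 (hs.succ_notMem_of_isLeast_odd hmin)]

end EvenLtOdd

theorem lowerMaxEven_mem_filter
    (hs : s ∈ {t ∈ distinctPartSets m (n + 1) | EvenLtOdd t ∧ ∃ a ∈ t, Even a}) :
    lowerMaxEven s ∈ {t ∈ distinctPartSets m n | EvenLtOdd t ∧ ∃ b ∈ t, Odd b} := by
  obtain ⟨hmem, hlt, hex⟩ := mem_filter.1 hs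
  obtain ⟨b, hmax⟩ := exists_isGreatest_even_succ (mem_distinctPartSets.1 hmem).1 hex
  have hmin := hlt.isLeast_odd_replacePart hmax
  rw [lowerMaxEven_eq_replacePart hmax]
  refine mem_filter.2 ⟨?_, hlt.replacePart_of_isGreatest_even hmax, b, hmin.1⟩
  exact replacePart_mem_distinctPartSets hmem hmax.1.1 (hlt.notMem_of_isGreatest_even hmax)
    hmin.1.2.pos.ne' (by ring)

theorem raiseMinOdd_mem_filter
    (hs : s ∈ {t ∈ distinctPartSets m n | EvenLtOdd t ∧ ∃ b ∈ t, Odd b}) :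
    raiseMinOdd s ∈ {t ∈ distinctPartSets m (n + 1) | EvenLtOdd t ∧ ∃ a ∈ t, Even a} := by
  obtain ⟨hmem, hlt, hex⟩ := mem_filter.1 hs
  have hmin := isLeast_csInf (s := {b | b ∈ s ∧ Odd b}) hex
  rw [raiseMinOdd_eq_replacePart hmin]
  refine mem_filter.2 ⟨?_, hlt.replacePart_of_isLeast_odd hmin, _,
    (hlt.isGreatest_even_replacePart hmin).1⟩
  exact replacePart_mem_distinctPartSets hmem hmin.1.1 (hlt.succ_notMem_of_isLeast_odd hmin)
    (Nat.succ_ne_zero _) (by ring)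

theorem card_filter_exists_even_eq_card_filter_exists_odd (m n : ℕ) :
    #{s ∈ distinctPartSets m (n + 1) | EvenLtOdd s ∧ ∃ a ∈ s, Even a} =
      #{s ∈ distinctPartSets m n | EvenLtOdd s ∧ ∃ b ∈ s, Odd b} := by
  refine card_nbij' lowerMaxEven raiseMinOdd (fun _ => lowerMaxEven_mem_filter)
    (fun _ => raiseMinOdd_mem_filter) (fun s hs => ?_) (fun s hs => ?_)
  · obtain ⟨hmem, hlt, hex⟩ := mem_filter.1 hs
    exact hlt.raiseMinOdd_lowerMaxEven (mem_distinctPartSets.1 hmem).1 hex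
  · obtain ⟨-, hlt, hex⟩ := mem_filter.1 hs
    exact hlt.lowerMaxEven_raiseMinOdd hex

end LowerRaise

theorem podEd_eq_card_filter (m n : ℕ) :
    podEd m n = #{s ∈ distinctPartSets m n | EvenLtOdd s} :=
  natCard_partition_eq_card_filter m n
    fun p => ∀ a ∈ p, ∀ b ∈ p, Even a → Odd b → a < b

theorem Dodd_eq_card_filter (m n : ℕ) :
    Dodd m n = #{s ∈ distinctPartSets m n | ∀ a ∈ s, Odd a} :=
  natCard_partition_eq_card_filter m n fun p => ∀ a ∈ p, Odd a

theorem Deven_eq_card_filter (m n : ℕ) :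
    Deven m n = #{s ∈ distinctPartSets m n | ∀ a ∈ s, Even a} :=
  natCard_partition_eq_card_filter m n fun p => ∀ a ∈ p, Even a

theorem evenLtOdd_and_not_exists_even_iff {s : Finset ℕ} :
    (EvenLtOdd s ∧ ¬∃ a ∈ s, Even a) ↔ ∀ a ∈ s, Odd a := by
  simp only [not_exists, not_and, Nat.not_even_iff_odd, and_iff_right_iff_imp]
  exact fun hodd a ha _ _ hae _ => absurd hae (Nat.not_even_iff_odd.2 (hodd a ha))

theorem evenLtOdd_and_not_exists_odd_iff {s : Finset ℕ} :
    (EvenLtOdd s ∧ ¬∃ b ∈ s, Odd b) ↔ ∀ a ∈ s, Even a := by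
  simp only [not_exists, not_and, Nat.not_odd_iff_even, and_iff_right_iff_imp]
  exact fun heven _ _ b hb _ hbo => absurd hbo (Nat.not_odd_iff_even.2 (heven b hb))

theorem podEd_eq_card_filter_add (m n : ℕ) (Q : Finset ℕ → Prop) [DecidablePred Q] :
    podEd m n = #{s ∈ distinctPartSets m n | EvenLtOdd s ∧ Q s} +
      #{s ∈ distinctPartSets m n | EvenLtOdd s ∧ ¬Q s} := by
  rw [podEd_eq_card_filter, ← filter_filter, ← filter_filter, card_filter_add_card_filter_not]

theorem podEd_eq_card_filter_exists_even_add_Dodd (m n : ℕ) :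
    podEd m n =
      #{s ∈ distinctPartSets m n | EvenLtOdd s ∧ ∃ a ∈ s, Even a} + Dodd m n := by
  rw [podEd_eq_card_filter_add m n fun s => ∃ a ∈ s, Even a, Dodd_eq_card_filter]
  simp only [evenLtOdd_and_not_exists_even_iff]

theorem podEd_eq_card_filter_exists_odd_add_Deven (m n : ℕ) :
    podEd m n =
      #{s ∈ distinctPartSets m n | EvenLtOdd s ∧ ∃ b ∈ s, Odd b} + Deven m n := by
  rw [podEd_eq_card_filter_add m n fun s => ∃ b ∈ s, Odd b, Deven_eq_card_filter]
  simp only [evenLtOdd_and_not_exists_odd_iff]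

theorem Deven_eq_zero_of_odd (m : ℕ) {n : ℕ} (hn : Odd n) : Deven m n = 0 := by
  have hempty : IsEmpty {π : n.Partition // π.parts.Nodup ∧ Multiset.card π.parts = m ∧
      ∀ a ∈ π.parts, Even a} := by
    refine ⟨fun ⟨π, _, _, heven⟩ => Nat.not_even_iff_odd.2 hn ?_⟩
    rw [← π.parts_sum, even_iff_two_dvd]
    exact Multiset.dvd_sum fun a ha => (heven a ha).two_dvd
  exact Nat.card_of_isEmpty

theorem podEd_even_diff_general (m n : ℕ) :
    (podEd m (n + 1) : ℤ) - podEd m n = Dodd m (n + 1) - Deven m n := by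
  rw [podEd_eq_card_filter_exists_even_add_Dodd, podEd_eq_card_filter_exists_odd_add_Deven,
    card_filter_exists_even_eq_card_filter_exists_odd]
  push_cast
  ring

theorem podEd_even_diff (m n : ℕ) (hm : 1 ≤ m) (hn : 1 ≤ n) :
    (podEd m (2 * n) : ℤ) - (podEd m (2 * n - 1) : ℤ) = (Dodd m (2 * n) : ℤ) := by
  obtain ⟨k, rfl⟩ := Nat.exists_eq_add_of_le' hn
  simpa [mul_add, Deven_eq_zero_of_odd m (odd_two_mul_add_one k)]
    using podEd_even_diff_general m (2 * k + 1)
end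

section
/- For all integers m ≥ 1 and n ≥ 1, p^{ed}_{od}(2m,2n) = p^{ed}_{od}(2m,2n-1). -/
/-- Number of partitions of `n` into exactly `m` distinct parts in which
every odd part is smaller than every even part and at least one odd part occurs. -/
noncomputable def pedOd (m n : ℕ) : ℕ :=
  Nat.card {π : n.Partition // π.parts.Nodup ∧ Multiset.card π.parts = m ∧
    (∀ a ∈ π.parts, ∀ b ∈ π.parts, Odd a → Even b → a < b) ∧
    (∃ a ∈ π.parts, Odd a)}

/-!
Fix an even number `b` and a finite set `t` whose odd elements lie below `b` and whose even
elements lie above `b`. Adjoining `b` to `t` gives a set with every odd element below every even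
one, in which `b` is the least even element; adjoining `b + 1` gives one in which `b + 1` is the
greatest odd element. Both constructions are reversible, so trading `b + 1` for `b` is a bijection
lowering the sum by one and keeping the number of parts. An even number of parts with odd sum
cannot all be odd, and an odd sum of parts forces an odd part besides `b`, so no partition counted
here is missed.
-/

/-- The condition that every odd part is smaller than every even part, on the set of parts of a
partition into distinct parts. -/
def ParityOrdered (s : Finset ℕ) : Prop :=
  ∀ a ∈ s, ∀ b ∈ s, Odd a → Even b → a < b

/-- The sets of parts of the partitions counted by `pedOd m n`. Positivity of the parts is not
imposed, since an odd element of a parity-ordered set excludes `0`. -/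
def parityOrderedSets (m n : ℕ) : Set (Finset ℕ) :=
  {s | s.card = m ∧ ∑ x ∈ s, x = n ∧ ParityOrdered s ∧ ∃ a ∈ s, Odd a}

/-- The even number `b` separates the odd elements of `t` from the even ones: `t` is what remains
of a parity-ordered set when its least even element `b`, or its greatest odd element `b + 1`, is
removed. -/
def IsParityCut (b : ℕ) (t : Finset ℕ) : Prop :=
  Even b ∧ ∀ x ∈ t, (Odd x → x < b) ∧ (Even x → b < x)

theorem ParityOrdered.pos {s : Finset ℕ} (hs : ParityOrdered s) (hodd : ∃ a ∈ s, Odd a)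
    {x : ℕ} (hx : x ∈ s) : 0 < x := by
  obtain ⟨a, ha, ha_odd⟩ := hodd
  rcases Nat.even_or_odd x with hx_even | hx_odd
  · exact Nat.zero_lt_of_lt (hs a ha x hx ha_odd hx_even)
  · exact hx_odd.pos

theorem pedOd_eq_ncard_parityOrderedSets (m n : ℕ) :
    pedOd m n = (parityOrderedSets m n).ncard :=
  Nat.card_congr
    { toFun := fun ⟨π, hnodup, hcard, hord, hodd⟩ =>
        ⟨⟨π.parts, hnodup⟩, hcard, (Finset.sum_val ⟨_, hnodup⟩).symm.trans π.parts_sum, hord, hodd⟩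
      invFun := fun ⟨s, hcard, hsum, hord, hodd⟩ =>
        ⟨⟨s.val, fun hx => ParityOrdered.pos hord hodd hx, (Finset.sum_val s).trans hsum⟩,
          s.nodup, hcard, hord, hodd⟩
      left_inv := fun ⟨_, _, _, _, _⟩ => rfl
      right_inv := fun ⟨_, _, _, _, _⟩ => rfl }

namespace IsParityCut

variable {b b' : ℕ} {t t' : Finset ℕ}

theorem notMem (h : IsParityCut b t) : b ∉ t :=
  fun hb => lt_irrefl b ((h.2 b hb).2 h.1)

theorem succ_notMem (h : IsParityCut b t) : b + 1 ∉ t :=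
  fun hb => (Nat.lt_succ_self b).not_gt ((h.2 _ hb).1 h.1.add_one)

theorem parityOrdered_insert (h : IsParityCut b t) : ParityOrdered (insert b t) := by
  intro x hx y hy hx_odd hy_even
  have hx_lt : x < b := by
    rcases Finset.mem_insert.1 hx with rfl | hxt
    · exact absurd h.1 (Nat.not_even_iff_odd.2 hx_odd)
    · exact (h.2 x hxt).1 hx_odd
  rcases Finset.mem_insert.1 hy with rfl | hyt
  · exact hx_lt
  · exact hx_lt.trans ((h.2 y hyt).2 hy_even)

theorem parityOrdered_insert_succ (h : IsParityCut b t) : ParityOrdered (insert (b + 1) t) := by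
  intro x hx y hy hx_odd hy_even
  have hy_mem : y ∈ t :=
    Finset.mem_of_mem_insert_of_ne hy fun hyb =>
      Nat.not_even_iff_odd.2 h.1.add_one (hyb ▸ hy_even)
  have hy_gt : b < y := (h.2 y hy_mem).2 hy_even
  rcases Finset.mem_insert.1 hx with rfl | hxt
  · exact lt_of_le_of_ne hy_gt fun hby => h.succ_notMem (hby ▸ hy_mem)
  · exact ((h.2 x hxt).1 hx_odd).trans hy_gt

theorem le_of_even_of_mem_insert (h : IsParityCut b t) {x : ℕ} (hx : x ∈ insert b t)
    (hx_even : Even x) : b ≤ x := by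
  rcases Finset.mem_insert.1 hx with rfl | hxt
  · exact le_rfl
  · exact ((h.2 x hxt).2 hx_even).le

theorem le_of_odd_of_mem_insert_succ (h : IsParityCut b t) {x : ℕ} (hx : x ∈ insert (b + 1) t)
    (hx_odd : Odd x) : x ≤ b + 1 := by
  rcases Finset.mem_insert.1 hx with rfl | hxt
  · exact le_rfl
  · exact ((h.2 x hxt).1 hx_odd).le.trans b.le_succ

theorem eq_of_insert_eq (h : IsParityCut b t) (h' : IsParityCut b' t')
    (heq : insert b t = insert b' t') : b = b' ∧ t = t' := by
  obtain rfl : b = b' := le_antisymm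
    (h.le_of_even_of_mem_insert (heq ▸ Finset.mem_insert_self b' t') h'.1)
    (h'.le_of_even_of_mem_insert (heq ▸ Finset.mem_insert_self b t) h.1)
  exact ⟨rfl, by rw [← Finset.erase_insert h.notMem, heq, Finset.erase_insert h'.notMem]⟩

theorem eq_of_insert_succ_eq (h : IsParityCut b t) (h' : IsParityCut b' t')
    (heq : insert (b + 1) t = insert (b' + 1) t') : b = b' ∧ t = t' := by
  obtain rfl : b = b' := Nat.succ_injective <| le_antisymm
    (h'.le_of_odd_of_mem_insert_succ (heq ▸ Finset.mem_insert_self (b + 1) t) h.1.add_one)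
    (h.le_of_odd_of_mem_insert_succ (heq ▸ Finset.mem_insert_self (b' + 1) t') h'.1.add_one)
  exact ⟨rfl, by
    rw [← Finset.erase_insert h.succ_notMem, heq, Finset.erase_insert h'.succ_notMem]⟩

end IsParityCut

theorem ParityOrdered.exists_isParityCut_insert_eq {s : Finset ℕ} (hs : ParityOrdered s)
    (heven : ∃ b ∈ s, Even b) : ∃ b t, IsParityCut b t ∧ insert b t = s := by
  have hne : (s.filter Even).Nonempty := Finset.filter_nonempty_iff.2 heven
  obtain ⟨b, hb, hmin⟩ := (s.filter Even).exists_min_image id hne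
  obtain ⟨hbs, hb_even⟩ := Finset.mem_filter.1 hb
  refine ⟨b, s.erase b, ⟨hb_even, fun x hx => ?_⟩, Finset.insert_erase hbs⟩
  obtain ⟨hxb, hxs⟩ := Finset.mem_erase.1 hx
  exact ⟨fun hx_odd => hs x hxs b hbs hx_odd hb_even,
    fun hx_even => (hmin x (Finset.mem_filter.2 ⟨hxs, hx_even⟩)).lt_of_ne' hxb⟩

theorem ParityOrdered.exists_isParityCut_insert_succ_eq {s : Finset ℕ} (hs : ParityOrdered s)
    (hodd : ∃ a ∈ s, Odd a) : ∃ b t, IsParityCut b t ∧ insert (b + 1) t = s := by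
  have hne : (s.filter Odd).Nonempty := Finset.filter_nonempty_iff.2 hodd
  obtain ⟨a, ha, hmax⟩ := (s.filter Odd).exists_max_image id hne
  obtain ⟨has, ha_odd⟩ := Finset.mem_filter.1 ha
  obtain ⟨k, rfl⟩ := ha_odd
  refine ⟨2 * k, s.erase (2 * k + 1), ⟨even_two_mul k, fun x hx => ?_⟩, Finset.insert_erase has⟩
  obtain ⟨hxa, hxs⟩ := Finset.mem_erase.1 hx
  constructor
  · intro hx_odd
    have hx_le : x ≤ 2 * k + 1 := hmax x (Finset.mem_filter.2 ⟨hxs, hx_odd⟩)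
    grind
  · intro hx_even
    exact (Nat.lt_succ_self _).trans (hs _ has x hxs (odd_two_mul_add_one k) hx_even)

theorem bijOn_insert_isParityCut :
    Set.BijOn (fun p : ℕ × Finset ℕ => insert p.1 p.2) {p | IsParityCut p.1 p.2}
      {s | ParityOrdered s ∧ ∃ b ∈ s, Even b} := by
  refine ⟨fun p hp => ⟨hp.parityOrdered_insert, p.1, Finset.mem_insert_self _ _, hp.1⟩,
    fun p hp q hq heq => Prod.ext_iff.2 (hp.eq_of_insert_eq hq heq), ?_⟩
  rintro s ⟨hs, heven⟩
  obtain ⟨b, t, hcut, rfl⟩ := hs.exists_isParityCut_insert_eq heven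
  exact ⟨(b, t), hcut, rfl⟩

theorem bijOn_insert_succ_isParityCut :
    Set.BijOn (fun p : ℕ × Finset ℕ => insert (p.1 + 1) p.2) {p | IsParityCut p.1 p.2}
      {s | ParityOrdered s ∧ ∃ a ∈ s, Odd a} := by
  refine ⟨fun p hp =>
      ⟨hp.parityOrdered_insert_succ, p.1 + 1, Finset.mem_insert_self _ _, hp.1.add_one⟩,
    fun p hp q hq heq => Prod.ext_iff.2 (hp.eq_of_insert_succ_eq hq heq), ?_⟩
  rintro s ⟨hs, hodd⟩
  obtain ⟨b, t, hcut, rfl⟩ := hs.exists_isParityCut_insert_succ_eq hodd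
  exact ⟨(b, t), hcut, rfl⟩

theorem exists_odd_mem_of_odd_sum {s : Finset ℕ} (hs : Odd (∑ x ∈ s, x)) : ∃ a ∈ s, Odd a := by
  contrapose! hs
  simp only [Nat.not_odd_iff_even] at hs ⊢
  exact Finset.even_sum (fun x => x) hs

theorem exists_even_mem_of_even_card_of_odd_sum {s : Finset ℕ} (hcard : Even s.card)
    (hsum : Odd (∑ x ∈ s, x)) : ∃ b ∈ s, Even b := by
  contrapose! hsum
  simp only [Nat.not_even_iff_odd] at hsum
  rwa [Nat.not_odd_iff_even, Finset.even_sum_iff_even_card_odd,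
    Finset.filter_true_of_mem hsum]

theorem IsParityCut.insert_succ_mem_parityOrderedSets_iff {b m n : ℕ} {t : Finset ℕ}
    (h : IsParityCut b t) (hn : Odd n) :
    insert (b + 1) t ∈ parityOrderedSets m (n + 1) ↔ insert b t ∈ parityOrderedSets m n := by
  have hcard : (insert (b + 1) t).card = (insert b t).card := by
    rw [Finset.card_insert_of_notMem h.succ_notMem, Finset.card_insert_of_notMem h.notMem]
  have hsum : ∑ x ∈ insert (b + 1) t, x = ∑ x ∈ insert b t, x + 1 := by
    rw [Finset.sum_insert h.succ_notMem, Finset.sum_insert h.notMem, add_right_comm]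
  constructor
  · rintro ⟨hm, hn', -, -⟩
    have hsum_n : ∑ x ∈ insert b t, x = n := Nat.succ_injective (hsum.symm.trans hn')
    exact ⟨hcard.symm.trans hm, hsum_n, h.parityOrdered_insert,
      exists_odd_mem_of_odd_sum (hsum_n ▸ hn)⟩
  · rintro ⟨hm, rfl, -, -⟩
    exact ⟨hcard.trans hm, hsum, h.parityOrdered_insert_succ,
      b + 1, Finset.mem_insert_self _ _, h.1.add_one⟩

theorem pedOd_even_parts_eq (m n : ℕ) (hm : 1 ≤ m) (hn : 1 ≤ n) :
    pedOd (2 * m) (2 * n) = pedOd (2 * m) (2 * n - 1) := by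
  obtain ⟨N, hN⟩ : ∃ N, 2 * n = N + 1 := ⟨2 * n - 1, by lia⟩
  have hN_odd : Odd N := by grind
  rw [hN, Nat.add_sub_cancel, pedOd_eq_ncard_parityOrderedSets, pedOd_eq_ncard_parityOrderedSets]
  have hlarge := bijOn_insert_succ_isParityCut.subset_right
    (r := parityOrderedSets (2 * m) (N + 1)) fun s hs => hs.2.2
  have hsmall := bijOn_insert_isParityCut.subset_right
    (r := parityOrderedSets (2 * m) N) fun s ⟨hcard, hsum, hord, _⟩ =>
      ⟨hord, exists_even_mem_of_even_card_of_odd_sum (hcard ▸ even_two_mul m) (hsum ▸ hN_odd)⟩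
  rw [← hlarge.ncard_eq, ← hsmall.ncard_eq]
  congr 1
  ext p
  exact and_congr_right fun hp => hp.insert_succ_mem_parityOrderedSets_iff hN_odd
end
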